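/- arXiv:2406.02675 — 4 statements merged into one kernel-verified Lean document; each statement's English description precedes it below -/
import Mathlib

section
/- Let M_0 be a particle-number-conserving Markov generator with normalized stationary states S_0, ..., S_L as in the context, and assume B_N ≠ 0 for every 1 ≤ N ≤ L. Define p_0 = 1, p_N = ∏_{i=1}^{N} (A_L − A_{i−1})/B_i for 1 ≤ N ≤ L, and S = ∑_{N=0}^{L} p_N S_N. Then M_0 S = 0 and, for every 0 ≤ N ≤ L, ∑_{A ∈ W_N} (H S)(A) = 0. (Thus S, after normalization, is the stationary state of M_0 + εH at leading order in ε.) -/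
/-!
Linearity gives `M₀ S = 0`. For the second claim, summing a column `B` of `H` over the sector
`W_N` leaves only the gain from below, the gain from above and the loss (`colSum`). Pairing this
with `S_n`, which is a normalized state on `W_n`, turns the sector sum of `H S` into the balance
equation of a birth-death chain on particle numbers, with birth rate `A_L - A_N` and death rate
`B_N`. The weights `p_N` satisfy the detailed balance relation
`p_{N+1} B_{N+1} = p_N (A_L - A_N)` (`pWeight_balance`), so all terms cancel; the boundary terms
vanish because `B_0 = 0` and the birth rate at `N = L` is zero.
-/

open Finset

/-- The set of sites `{1, ..., L}`. -/
def sites (L : ℕ) : Finset ℕ := Finset.Icc 1 L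

/-- `W L N` : the collection of `N`-element subsets of `{1, ..., L}`
(the `N`-particle sector). -/
def W (L N : ℕ) : Finset (Finset ℕ) := Finset.powersetCard N (sites L)

/-- The adsorption/desorption generator `H` with adsorption rates `α i` and
desorption rates `β i`: `H (B ∪ {i}) B = α i` for `i ∉ B`,
`H (B \ {i}) B = β i` for `i ∈ B`,
`H B B = -(∑_{i ∉ B} α i + ∑_{i ∈ B} β i)`, all other entries zero. -/
noncomputable def Hmat (L : ℕ) (α β : ℕ → ℝ) (A B : Finset ℕ) : ℝ :=
  if A = B then -((∑ i ∈ sites L \ B, α i) + ∑ i ∈ B, β i)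
  else if B ⊆ A ∧ (A \ B).card = 1 then ∑ i ∈ A \ B, α i
  else if A ⊆ B ∧ (B \ A).card = 1 then ∑ i ∈ B \ A, β i
  else 0

/-- The action of `H` on functions on configurations: `(Hf)(A) = ∑_B H(A,B) f(B)`. -/
noncomputable def Hact (L : ℕ) (α β : ℕ → ℝ) (f : Finset ℕ → ℝ) (A : Finset ℕ) : ℝ :=
  ∑ B ∈ (sites L).powerset, Hmat L α β A B * f B

/-- `secExp L γ S N = ∑_{B ∈ W_N} S_N(B) ∑_{i ∈ B} γ i`, the sector-`N` expectation of the
total rate `γ` under the stationary state `S N` (this gives `A_N` for `γ = α` and `B_N`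
for `γ = β`). -/
noncomputable def secExp (L : ℕ) (γ : ℕ → ℝ) (S : ℕ → Finset ℕ → ℝ) (N : ℕ) : ℝ :=
  ∑ B ∈ W L N, S N B * ∑ i ∈ B, γ i

/-- `pWeight L α β S N = ∏_{i=1}^N (A_L − A_{i−1})/B_i`. -/
noncomputable def pWeight (L : ℕ) (α β : ℕ → ℝ) (S : ℕ → Finset ℕ → ℝ) (N : ℕ) : ℝ :=
  ∏ i ∈ Finset.Icc 1 N, (secExp L α S L - secExp L α S (i - 1)) / secExp L β S i

/-- Total gain of the sector above from a configuration `B`: summing over the supersets of `B`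
with one more particle is summing over the empty sites. -/
theorem colSum_up (L : ℕ) (α β : ℕ → ℝ) (B : Finset ℕ) (hB : B ⊆ sites L) :
    ∑ A ∈ W L (B.card + 1), Hmat L α β A B = ∑ i ∈ sites L, α i - ∑ i ∈ B, α i := by
  rw [← Finset.sum_sdiff hB, add_sub_cancel_right]
  symm
  apply Finset.sum_of_injOn (fun i => insert i B)
  · intro i hi j hj h
    simp only [Finset.coe_sdiff, Set.mem_sdiff, Finset.mem_coe] at hi hj h
    have : i ∈ insert j B := h ▸ Finset.mem_insert_self i B
    exact (Finset.mem_insert.1 this).resolve_right hi.2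
  · intro i hi
    simp only [Finset.coe_sdiff, Set.mem_sdiff, Finset.mem_coe] at hi
    simp only [W, Finset.mem_coe, Finset.mem_powersetCard]
    exact ⟨Finset.insert_subset hi.1 hB, Finset.card_insert_of_notMem hi.2⟩
  · intro A hA hn
    obtain ⟨hAs, hAc⟩ := Finset.mem_powersetCard.1 hA
    have h1 : A ≠ B := by rintro rfl; omega
    have h2 : ¬ (B ⊆ A ∧ (A \ B).card = 1) := by
      rintro ⟨h, hc⟩
      obtain ⟨i, hi⟩ := Finset.card_eq_one.1 hc
      have hiAB : i ∈ A \ B := hi ▸ Finset.mem_singleton_self i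
      rw [Finset.mem_sdiff] at hiAB
      apply hn
      refine ⟨i, ?_, ?_⟩
      · simpa using ⟨hAs hiAB.1, hiAB.2⟩
      · change insert i B = A
        rw [← Finset.union_sdiff_of_subset h, hi, Finset.union_comm]
        rfl
    have h3 : ¬ (A ⊆ B ∧ (B \ A).card = 1) := by
      rintro ⟨h, -⟩
      have := Finset.card_le_card h
      omega
    simp [Hmat, h1, h2, h3]
  · intro i hi
    have hi2 := (Finset.mem_sdiff.1 hi).2
    have h1 : insert i B ≠ B := fun h => hi2 (h ▸ Finset.mem_insert_self i B)
    have h2 : insert i B \ B = {i} := by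
      ext j; simp only [Finset.mem_sdiff, Finset.mem_insert, Finset.mem_singleton]
      grind
    simp [Hmat, h1, h2]

/-- Total gain of the sector below from a configuration `B`: summing over the subsets of `B`
with one particle less is summing over the occupied sites. -/
theorem colSum_down (L : ℕ) (α β : ℕ → ℝ) (B : Finset ℕ) (hB : B ⊆ sites L) (N : ℕ)
    (hN : B.card = N + 1) :
    ∑ A ∈ W L N, Hmat L α β A B = ∑ i ∈ B, β i := by
  symm
  apply Finset.sum_of_injOn (fun i => B.erase i)
  · intro i hi j hj h
    exact (Finset.erase_injOn B) hi hj h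
  · intro i hi
    rw [Finset.mem_coe] at hi
    simp only [W, Finset.mem_coe, Finset.mem_powersetCard]
    refine ⟨(Finset.erase_subset i B).trans hB, ?_⟩
    rw [Finset.card_erase_of_mem hi, hN]
    rfl
  · intro A hA hn
    obtain ⟨hAs, hAc⟩ := Finset.mem_powersetCard.1 hA
    have h1 : A ≠ B := by rintro rfl; omega
    have h2 : ¬ (B ⊆ A ∧ (A \ B).card = 1) := by
      rintro ⟨h, -⟩
      have := Finset.card_le_card h
      omega
    have h3 : ¬ (A ⊆ B ∧ (B \ A).card = 1) := by
      rintro ⟨h, hc⟩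
      obtain ⟨i, hi⟩ := Finset.card_eq_one.1 hc
      have hiAB : i ∈ B \ A := hi ▸ Finset.mem_singleton_self i
      apply hn
      refine ⟨i, (Finset.mem_sdiff.1 hiAB).1, ?_⟩
      change B.erase i = A
      rw [Finset.erase_eq, ← hi, Finset.sdiff_sdiff_eq_self h]
    simp [Hmat, h1, h2, h3]
  · intro i hi
    have h1 : B.erase i ≠ B := fun h => Finset.notMem_erase i B (h.symm ▸ hi)
    have h2 : ¬ B ⊆ B.erase i := fun h => Finset.notMem_erase i B (h hi)
    have h3 : B \ B.erase i = {i} := by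
      ext j; simp only [Finset.mem_sdiff, Finset.mem_erase, Finset.mem_singleton]
      grind
    simp [Hmat, h1, h2, h3, Finset.erase_subset]

theorem colSum_diag (L : ℕ) (α β : ℕ → ℝ) (B : Finset ℕ) (hB : B ⊆ sites L) :
    ∑ A ∈ W L B.card, Hmat L α β A B
      = -((∑ i ∈ sites L, α i - ∑ i ∈ B, α i) + ∑ i ∈ B, β i) := by
  rw [← Finset.sum_sdiff hB, add_sub_cancel_right]
  have hmem : B ∈ W L B.card := Finset.mem_powersetCard.2 ⟨hB, rfl⟩
  rw [Finset.sum_eq_single_of_mem B hmem]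
  · simp [Hmat]
  · intro A hA hne
    obtain ⟨-, hAc⟩ := Finset.mem_powersetCard.1 hA
    have h2 : ¬ (B ⊆ A ∧ (A \ B).card = 1) := fun h =>
      hne (Finset.eq_of_subset_of_card_le h.1 hAc.le).symm
    have h3 : ¬ (A ⊆ B ∧ (B \ A).card = 1) := fun h =>
      hne (Finset.eq_of_subset_of_card_le h.1 hAc.ge)
    simp [Hmat, hne, h2, h3]

/-- The sum of column `B` of `H` over the sector `W_N`. -/
theorem colSum (L : ℕ) (α β : ℕ → ℝ) (B : Finset ℕ) (hB : B ⊆ sites L) (N : ℕ) :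
    ∑ A ∈ W L N, Hmat L α β A B
      = (if B.card + 1 = N then ∑ i ∈ sites L, α i - ∑ i ∈ B, α i else 0)
        + (if B.card = N + 1 then ∑ i ∈ B, β i else 0)
        - (if B.card = N then (∑ i ∈ sites L, α i - ∑ i ∈ B, α i) + ∑ i ∈ B, β i else 0) := by
  by_cases h1 : B.card + 1 = N
  · subst h1
    simp [colSum_up L α β B hB, show B.card ≠ B.card + 1 + 1 by omega]
  by_cases h2 : B.card = N + 1
  · simp [colSum_down L α β B hB N h2, h2, show N + 1 + 1 ≠ N by omega]
  by_cases h3 : B.card = N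
  · subst h3
    simp [colSum_diag L α β B hB]
  simp only [h1, h2, h3, if_false, add_zero, sub_zero]
  apply Finset.sum_eq_zero
  intro A hA
  obtain ⟨-, hAc⟩ := Finset.mem_powersetCard.1 hA
  have e1 : A ≠ B := by rintro rfl; omega
  have e2 : ¬ (B ⊆ A ∧ (A \ B).card = 1) := by
    rintro ⟨h, hc⟩
    have := Finset.card_sdiff_add_card_eq_card h
    omega
  have e3 : ¬ (A ⊆ B ∧ (B \ A).card = 1) := by
    rintro ⟨h, hc⟩
    have := Finset.card_sdiff_add_card_eq_card h
    omega
  simp [Hmat, e1, e2, e3]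

theorem W_subset (L N : ℕ) : W L N ⊆ (sites L).powerset := fun _ h =>
  Finset.mem_powerset.2 (Finset.mem_powersetCard.1 h).1

/-- The rate at which `H` changes the population of sector `N` when applied to a normalized
state of sector `n`. -/
theorem colSum_state (L : ℕ) (α β : ℕ → ℝ) (S : ℕ → Finset ℕ → ℝ) (n N : ℕ)
    (hsupp : ∀ B : Finset ℕ, B ∉ W L n → S n B = 0)
    (hnorm : ∑ B ∈ (sites L).powerset, S n B = 1) :
    ∑ B ∈ (sites L).powerset, (∑ A ∈ W L N, Hmat L α β A B) * S n B
      = (if n + 1 = N then ∑ i ∈ sites L, α i - secExp L α S n else 0)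
        + (if n = N + 1 then secExp L β S n else 0)
        - (if n = N then (∑ i ∈ sites L, α i - secExp L α S n) + secExp L β S n else 0) := by
  have hnorm' : ∑ B ∈ W L n, S n B = 1 := by
    rw [← hnorm]
    exact Finset.sum_subset (W_subset L n) fun B _ hB => hsupp B hB
  rw [← Finset.sum_subset (W_subset L n) fun B _ hB => by rw [hsupp B hB, mul_zero]]
  have hA : ∑ B ∈ W L n, (∑ i ∈ sites L, α i - ∑ i ∈ B, α i) * S n B
      = ∑ i ∈ sites L, α i - secExp L α S n := by
    simp only [sub_mul, Finset.sum_sub_distrib, ← Finset.mul_sum, hnorm', mul_one, secExp]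
    congr 1
    exact Finset.sum_congr rfl fun B _ => mul_comm _ _
  have hB : ∑ B ∈ W L n, (∑ i ∈ B, β i) * S n B = secExp L β S n :=
    Finset.sum_congr rfl fun B _ => mul_comm _ _
  rw [← hA, ← hB, ← Finset.sum_add_distrib]
  have key : ∀ B ∈ W L n, (∑ A ∈ W L N, Hmat L α β A B) * S n B
      = (if n + 1 = N then (∑ i ∈ sites L, α i - ∑ i ∈ B, α i) * S n B else 0)
        + (if n = N + 1 then (∑ i ∈ B, β i) * S n B else 0)
        - (if n = N then (∑ i ∈ sites L, α i - ∑ i ∈ B, α i) * S n B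
            + (∑ i ∈ B, β i) * S n B else 0) := by
    intro B hBW
    obtain ⟨hs, hc⟩ := Finset.mem_powersetCard.1 hBW
    rw [colSum L α β B hs N, hc]
    split_ifs <;> ring
  rw [Finset.sum_congr rfl key, Finset.sum_sub_distrib, Finset.sum_add_distrib]
  split_ifs <;> simp

theorem secExp_top (L : ℕ) (α : ℕ → ℝ) (S : ℕ → Finset ℕ → ℝ)
    (hsupp : ∀ B : Finset ℕ, B ∉ W L L → S L B = 0)
    (hnorm : ∑ B ∈ (sites L).powerset, S L B = 1) :
    secExp L α S L = ∑ i ∈ sites L, α i := by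
  have hW : W L L = {sites L} := by
    have h := Finset.powersetCard_self (sites L)
    rwa [show (sites L).card = L by simp [sites]] at h
  rw [← Finset.sum_subset (W_subset L L) fun B _ hB => hsupp B hB, hW,
    Finset.sum_singleton] at hnorm
  rw [secExp, hW, Finset.sum_singleton, hnorm, one_mul]

theorem secExp_zero (L : ℕ) (γ : ℕ → ℝ) (S : ℕ → Finset ℕ → ℝ) : secExp L γ S 0 = 0 := by
  simp [secExp, W]

/-- Detailed balance of the weights between the sectors `n` and `n + 1`. -/
theorem pWeight_balance (L : ℕ) (α β : ℕ → ℝ) (S : ℕ → Finset ℕ → ℝ) (n : ℕ)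
    (h : secExp L β S (n + 1) ≠ 0) :
    pWeight L α β S (n + 1) * secExp L β S (n + 1)
      = pWeight L α β S n * (secExp L α S L - secExp L α S n) := by
  rw [pWeight, Finset.prod_Icc_succ_top (by omega), ← pWeight, Nat.add_sub_cancel,
    mul_assoc, div_mul_cancel₀ _ h]

/-- for a particle-number-conserving Markov generator `M₀` with normalized
stationary states `S_0, ..., S_L` (`S_N` supported on `W_N`, `M₀ S_N = 0`, `∑ S_N = 1`),
if `B_N ≠ 0` for `1 ≤ N ≤ L` then `S = ∑_{N=0}^L p_N S_N` with
`p_N = ∏_{i=1}^N (A_L − A_{i−1})/B_i` satisfies `M₀ S = 0` and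
`∑_{A ∈ W_N} (H S)(A) = 0` for every `0 ≤ N ≤ L`. -/
theorem stmt6 (L : ℕ) (hL : 1 ≤ L) (α β : ℕ → ℝ)
    (M₀ : Finset ℕ → Finset ℕ → ℝ)
    (hcons : ∀ A B : Finset ℕ, A.card ≠ B.card → M₀ A B = 0)
    (hmarkov : ∀ B ∈ (sites L).powerset, ∑ A ∈ (sites L).powerset, M₀ A B = 0)
    (S : ℕ → Finset ℕ → ℝ)
    (hSsupp : ∀ N : ℕ, N ≤ L → ∀ B : Finset ℕ, B ∉ W L N → S N B = 0)
    (hSstat : ∀ N : ℕ, N ≤ L → ∀ A ∈ (sites L).powerset,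
      ∑ B ∈ (sites L).powerset, M₀ A B * S N B = 0)
    (hSnorm : ∀ N : ℕ, N ≤ L → ∑ B ∈ (sites L).powerset, S N B = 1)
    (hBne : ∀ N : ℕ, 1 ≤ N → N ≤ L → secExp L β S N ≠ 0) :
    (∀ A ∈ (sites L).powerset,
      ∑ B ∈ (sites L).powerset,
        M₀ A B * (∑ N ∈ Finset.range (L + 1), pWeight L α β S N * S N B) = 0) ∧
    (∀ N : ℕ, N ≤ L →
      ∑ A ∈ W L N,
        Hact L α β (fun B => ∑ N' ∈ Finset.range (L + 1), pWeight L α β S N' * S N' B) A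
          = 0) := by
  refine ⟨fun A hA => ?_, fun N hN => ?_⟩
  · simp only [Finset.mul_sum]
    rw [Finset.sum_comm]
    refine Finset.sum_eq_zero fun n hn => ?_
    have h := hSstat n (Nat.lt_succ_iff.1 (Finset.mem_range.1 hn)) A hA
    calc _ = pWeight L α β S n * ∑ B ∈ (sites L).powerset, M₀ A B * S n B := by
          rw [Finset.mul_sum]
          exact Finset.sum_congr rfl fun B _ => by ring
      _ = 0 := by rw [h, mul_zero]
  · have hswap : ∑ A ∈ W L N,
        Hact L α β (fun B => ∑ n ∈ Finset.range (L + 1), pWeight L α β S n * S n B) A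
        = ∑ n ∈ Finset.range (L + 1), pWeight L α β S n *
          ∑ B ∈ (sites L).powerset, (∑ A ∈ W L N, Hmat L α β A B) * S n B := by
      simp only [Hact]
      rw [Finset.sum_comm]
      simp only [← Finset.sum_mul]
      simp only [Finset.mul_sum]
      rw [Finset.sum_comm]
      refine Finset.sum_congr rfl fun n _ => Finset.sum_congr rfl fun B _ => by ring
    have htop := secExp_top L α S (hSsupp L le_rfl) (hSnorm L le_rfl)
    have hsec : ∀ n ∈ Finset.range (L + 1), _ := fun n hn =>
      have hn' : n ≤ L := Nat.lt_succ_iff.1 (Finset.mem_range.1 hn)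
      congrArg (pWeight L α β S n * ·)
        (colSum_state L α β S n N (hSsupp n hn') (hSnorm n hn'))
    rw [hswap, Finset.sum_congr rfl hsec]
    simp only [← htop, mul_sub, mul_add, mul_ite, mul_zero, Finset.sum_sub_distrib,
      Finset.sum_add_distrib, Finset.sum_ite_eq', Finset.mem_range]
    -- The exchange with sector `N + 1` balances; at `N = L` both sides vanish.
    have hup : (if N + 1 < L + 1 then pWeight L α β S (N + 1) * secExp L β S (N + 1) else 0)
        = pWeight L α β S N * (secExp L α S L - secExp L α S N) := by
      split_ifs with h
      · exact pWeight_balance L α β S N (hBne (N + 1) (by omega) (by omega))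
      · obtain rfl : N = L := by omega
        simp
    rw [hup, if_pos (by omega)]
    -- The exchange with sector `N - 1`, which is absent for `N = 0`.
    rcases N with _ | m
    · simp [secExp_zero]
    · have hb := pWeight_balance L α β S m (hBne (m + 1) (by omega) hN)
      simp only [Nat.add_right_cancel_iff, Finset.sum_ite_eq', Finset.mem_range]
      rw [if_pos (by omega), hb]
      ring
end

section
/- Let M_0 be a particle-number-conserving Markov generator with normalized stationary states S_0, ..., S_L as in the context, and let the rates be homogeneous: α_i = α > 0 and β_i = 1 for every site i. Then the vector S = (1+α)^{−L} ∑_{N=0}^{L} C(L,N) α^N S_N (where C(L,N) is the binomial coefficient) satisfies M_0 S = 0, ∑_A S(A) = 1, and ∑_{A ∈ W_N} (H S)(A) = 0 for every 0 ≤ N ≤ L. (This proves the conjecture of Phys. Rev. E 97, 032135 for the closed ASEP with infinitesimal Langmuir kinetics.) -/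
/-!
The particle number performs a birth-death chain under `H`: for homogeneous rates the total rate
from a configuration `B` into the sector `W_N` depends on `B` only through `|B|` (`sum_Hmat`),
namely `(L - |B|) α` upwards and `|B|` downwards. Hence `∑_{A ∈ W_N} (H S)(A)` involves the `S_N`
only through their total masses, which are all `1`, and the binomial weights
`C(L,k) α^k` satisfy detailed balance for this chain (`weight_succ`), so the net flux into each
sector vanishes. Stationarity under `M₀` is linearity, and normalization is the binomial theorem.
-/

open Finset

/-- The rate matrix of the particle number under homogeneous adsorption/desorption: the entry
from `k` particles to `N` particles. -/
noncomputable def sectorRate (L : ℕ) (α : ℝ) (N k : ℕ) : ℝ :=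
  (if k = N then -(((L : ℝ) - k) * α + k) else 0) + (if k + 1 = N then ((L : ℝ) - k) * α else 0)
    + (if k = N + 1 then (k : ℝ) else 0)

lemma Hmat_of_card_eq {L : ℕ} {α β : ℕ → ℝ} {A B : Finset ℕ} (h : A.card = B.card)
    (hne : A ≠ B) : Hmat L α β A B = 0 := by
  have h1 : ¬ B ⊆ A := fun hs => hne (eq_of_subset_of_card_le hs h.le).symm
  have h2 : ¬ A ⊆ B := fun hs => hne (eq_of_subset_of_card_le hs h.ge)
  simp [Hmat, hne, h1, h2]

lemma Hmat_up {L : ℕ} {α : ℝ} {β : ℕ → ℝ} {A B : Finset ℕ} (h : A.card = B.card + 1) :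
    Hmat L (fun _ => α) β A B = if B ⊆ A then α else 0 := by
  have hne : A ≠ B := by rintro rfl; omega
  have h2 : ¬ A ⊆ B := fun hs => by have := card_le_card hs; omega
  by_cases hs : B ⊆ A
  · have hc : (A \ B).card = 1 := by rw [card_sdiff_of_subset hs]; omega
    simp [Hmat, hne, hs, hc]
  · simp [Hmat, hne, hs, h2]

lemma Hmat_down {L : ℕ} {α : ℕ → ℝ} {A B : Finset ℕ} (h : B.card = A.card + 1) :
    Hmat L α (fun _ => 1) A B = if A ⊆ B then 1 else 0 := by
  have hne : A ≠ B := by rintro rfl; omega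
  have h2 : ¬ B ⊆ A := fun hs => by have := card_le_card hs; omega
  by_cases hs : A ⊆ B
  · have hc : (B \ A).card = 1 := by rw [card_sdiff_of_subset hs]; omega
    simp [Hmat, hne, hs, h2, hc]
  · simp [Hmat, hne, hs, h2]

lemma Hmat_far {L : ℕ} {α β : ℕ → ℝ} {A B : Finset ℕ} (h0 : A.card ≠ B.card)
    (h1 : A.card ≠ B.card + 1) (h2 : B.card ≠ A.card + 1) : Hmat L α β A B = 0 := by
  have hne : A ≠ B := by rintro rfl; omega
  have h3 : ¬ (B ⊆ A ∧ (A \ B).card = 1) := by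
    rintro ⟨hs, hc⟩
    rw [card_sdiff_of_subset hs] at hc; omega
  have h4 : ¬ (A ⊆ B ∧ (B \ A).card = 1) := by
    rintro ⟨hs, hc⟩
    rw [card_sdiff_of_subset hs] at hc; omega
  unfold Hmat
  rw [if_neg hne, if_neg h3, if_neg h4]

lemma card_supersets {s B : Finset ℕ} (hB : B ⊆ s) :
    ((powersetCard (B.card + 1) s).filter (B ⊆ ·)).card = s.card - B.card := by
  have : (powersetCard (B.card + 1) s).filter (B ⊆ ·) = (s \ B).image (fun i => insert i B) := by
    ext A
    simp only [mem_filter, mem_powersetCard, mem_image, mem_sdiff]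
    constructor
    · rintro ⟨⟨hA, hc⟩, hs⟩
      have h1 : (A \ B).card = 1 := by rw [card_sdiff_of_subset hs]; omega
      obtain ⟨i, hi⟩ := card_eq_one.1 h1
      have hi' : i ∈ A \ B := by simp [hi]
      rw [mem_sdiff] at hi'
      refine ⟨i, ⟨hA hi'.1, hi'.2⟩, ?_⟩
      rw [insert_eq, ← hi, sdiff_union_of_subset hs]
    · rintro ⟨i, ⟨his, hiB⟩, rfl⟩
      exact ⟨⟨insert_subset his hB, card_insert_of_notMem hiB⟩, subset_insert _ _⟩
  rw [this, card_image_of_injOn, card_sdiff_of_subset hB]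
  intro i hi j hj hij
  simp only [coe_sdiff, Set.mem_sdiff, mem_coe] at hi hj
  have : i ∈ insert j B := by
    have hij' : insert i B = insert j B := hij
    rw [← hij']; exact mem_insert_self _ _
  exact (mem_insert.1 this).resolve_right hi.2

lemma card_subsets {s B : Finset ℕ} {N : ℕ} (hB : B ⊆ s) (h : B.card = N + 1) :
    ((powersetCard N s).filter (· ⊆ B)).card = B.card := by
  have : (powersetCard N s).filter (· ⊆ B) = powersetCard N B := by
    ext A
    simp only [mem_filter, mem_powersetCard]
    exact ⟨fun h => ⟨h.2, h.1.2⟩, fun h => ⟨⟨h.1.trans hB, h.2⟩, h.1⟩⟩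
  rw [this, card_powersetCard, h, Nat.choose_succ_self_right]

/-- The total rate from `B` into the sector `W_N` depends on `B` only through its cardinality. -/
lemma sum_Hmat {L : ℕ} {α : ℝ} {N : ℕ} {B : Finset ℕ} (hB : B ⊆ sites L) :
    ∑ A ∈ W L N, Hmat L (fun _ => α) (fun _ => 1) A B = sectorRate L α N B.card := by
  have hsc : (sites L).card = L := by simp [sites]
  have hle : B.card ≤ L := hsc ▸ card_le_card hB
  have hW : ∀ A ∈ W L N, A.card = N := fun A hA => (mem_powersetCard.1 hA).2
  by_cases h0 : B.card = N
  · rw [sum_eq_single B]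
    · simp [Hmat, sectorRate, h0, card_sdiff_of_subset hB, hsc, Nat.cast_sub (h0 ▸ hle)]
    · intro A hA hne
      exact Hmat_of_card_eq ((hW A hA).trans h0.symm) hne
    · intro h
      exact absurd (mem_powersetCard.2 ⟨hB, h0⟩) h
  by_cases h1 : B.card + 1 = N
  · rw [sum_congr rfl (fun A hA => Hmat_up (by rw [hW A hA, h1])), ← sum_filter, sum_const]
    have hc := card_supersets hB
    rw [h1] at hc
    have h2 : B.card ≠ N + 1 := by omega
    rw [W, hc, hsc, sectorRate, if_neg h0, if_pos h1, if_neg h2, nsmul_eq_mul,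
      Nat.cast_sub hle]
    ring
  by_cases h2 : B.card = N + 1
  · rw [sum_congr rfl (fun A hA => Hmat_down (by rw [hW A hA, h2])), ← sum_filter, sum_const,
      W, card_subsets hB h2, sectorRate, if_neg h0, if_neg h1, if_pos h2]
    simp
  · rw [sum_eq_zero, sectorRate, if_neg h0, if_neg h1, if_neg h2]
    · simp
    · intro A hA
      have := hW A hA
      exact Hmat_far (by omega) (by omega) (by omega)

/-- Detailed balance of the binomial weights between the sectors `k` and `k + 1`. -/
lemma weight_succ {L k : ℕ} (α : ℝ) (hk : k ≤ L) :
    (L.choose (k + 1) : ℝ) * α ^ (k + 1) * ((k : ℝ) + 1)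
      = (L.choose k : ℝ) * α ^ k * (((L : ℝ) - k) * α) := by
  have h := congrArg (Nat.cast (R := ℝ)) (Nat.choose_succ_right_eq L k)
  push_cast [Nat.cast_sub hk] at h
  linear_combination α ^ (k + 1) * h

lemma sum_weight_sectorRate {L N : ℕ} (α : ℝ) (hN : N ≤ L) :
    ∑ k ∈ range (L + 1), (L.choose k : ℝ) * α ^ k * sectorRate L α N k = 0 := by
  have hgain : ∑ k ∈ range (L + 1), (L.choose k : ℝ) * α ^ k *
      (if k = N + 1 then (k : ℝ) else 0) = (L.choose N : ℝ) * α ^ N * (((L : ℝ) - N) * α) := by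
    rw [← weight_succ α hN]
    simp only [mul_ite, mul_zero, sum_ite_eq', mem_range]
    split_ifs with h
    · push_cast; ring
    -- the missing sector `L + 1` has weight zero
    · rw [Nat.choose_eq_zero_of_lt (by omega)]; simp
  have hdown : ∑ k ∈ range (L + 1), (L.choose k : ℝ) * α ^ k *
      (if k + 1 = N then ((L : ℝ) - k) * α else 0) = (L.choose N : ℝ) * α ^ N * N := by
    cases N with
    | zero => simp
    | succ n =>
      have hn : n < L + 1 := by omega
      have := weight_succ α (show n ≤ L by omega)
      simp only [Nat.add_right_cancel_iff, mul_ite, mul_zero, sum_ite_eq', mem_range, hn, if_true]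
      push_cast
      exact this.symm
  have hN' : N < L + 1 := by omega
  simp only [sectorRate, mul_add, sum_add_distrib] at *
  rw [hgain, hdown]
  simp only [mul_ite, mul_zero, sum_ite_eq', mem_range, hN', if_true]
  ring

/-- for a particle-number-conserving Markov generator `M₀` with normalized
stationary states `S_0, ..., S_L` and homogeneous rates `α_i = α > 0`, `β_i = 1`, the
vector `S = (1+α)^{−L} ∑_{N=0}^L C(L,N) α^N S_N` satisfies `M₀ S = 0`, `∑_A S(A) = 1`,
and `∑_{A ∈ W_N} (H S)(A) = 0` for every `0 ≤ N ≤ L`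
(the conjecture of Phys. Rev. E 97, 032135). -/
theorem stmt7 (L : ℕ) (hL : 1 ≤ L) (α : ℝ) (hα : 0 < α)
    (M₀ : Finset ℕ → Finset ℕ → ℝ)
    (hcons : ∀ A B : Finset ℕ, A.card ≠ B.card → M₀ A B = 0)
    (hmarkov : ∀ B ∈ (sites L).powerset, ∑ A ∈ (sites L).powerset, M₀ A B = 0)
    (S : ℕ → Finset ℕ → ℝ)
    (hSsupp : ∀ N : ℕ, N ≤ L → ∀ B : Finset ℕ, B ∉ W L N → S N B = 0)
    (hSstat : ∀ N : ℕ, N ≤ L → ∀ A ∈ (sites L).powerset,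
      ∑ B ∈ (sites L).powerset, M₀ A B * S N B = 0)
    (hSnorm : ∀ N : ℕ, N ≤ L → ∑ B ∈ (sites L).powerset, S N B = 1) :
    (∀ A ∈ (sites L).powerset,
      ∑ B ∈ (sites L).powerset,
        M₀ A B * (((1 + α) ^ L)⁻¹ *
          ∑ N ∈ Finset.range (L + 1), (L.choose N : ℝ) * α ^ N * S N B) = 0) ∧
    (∑ A ∈ (sites L).powerset,
      ((1 + α) ^ L)⁻¹ * ∑ N ∈ Finset.range (L + 1), (L.choose N : ℝ) * α ^ N * S N A
        = 1) ∧
    (∀ N : ℕ, N ≤ L →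
      ∑ A ∈ W L N,
        Hact L (fun _ => α) (fun _ => 1)
          (fun B => ((1 + α) ^ L)⁻¹ *
            ∑ N' ∈ Finset.range (L + 1), (L.choose N' : ℝ) * α ^ N' * S N' B) A = 0) := by
  have hpos : (1 + α) ^ L ≠ 0 := by positivity
  -- Linearity: pairing with `S` amounts to pairing with each `S_N` separately.
  have hlin : ∀ g : Finset ℕ → ℝ, ∑ B ∈ (sites L).powerset, g B * (((1 + α) ^ L)⁻¹ *
      ∑ N ∈ Finset.range (L + 1), (L.choose N : ℝ) * α ^ N * S N B) =
      ((1 + α) ^ L)⁻¹ * ∑ N ∈ Finset.range (L + 1), (L.choose N : ℝ) * α ^ N *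
        ∑ B ∈ (sites L).powerset, g B * S N B := by
    intro g
    simp only [mul_sum]
    rw [sum_comm]
    exact sum_congr rfl fun _ _ => sum_congr rfl fun _ _ => by ring
  refine ⟨fun A hA => ?_, ?_, fun N hN => ?_⟩
  · rw [hlin, sum_eq_zero, mul_zero]
    intro N hN
    rw [hSstat N (by simpa [Nat.lt_succ_iff] using hN) A hA, mul_zero]
  · have h := hlin (fun _ => 1)
    simp only [one_mul] at h
    rw [h, inv_mul_eq_one₀ hpos, add_comm, add_pow]
    refine sum_congr rfl fun N hN => ?_
    rw [hSnorm N (by simpa [Nat.lt_succ_iff] using hN)]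
    simp [mul_comm]
  · simp only [Hact]
    rw [sum_comm]
    simp only [← sum_mul]
    rw [hlin, mul_eq_zero]
    right
    rw [← sum_weight_sectorRate α hN]
    refine sum_congr rfl fun k hk => ?_
    have hk' : k ≤ L := by simpa [Nat.lt_succ_iff] using hk
    congr 1
    have hmass : sectorRate L α N k =
        ∑ B ∈ (sites L).powerset, sectorRate L α N k * S k B := by
      rw [← mul_sum, hSnorm k hk', mul_one]
    rw [hmass]
    refine sum_congr rfl fun B hB => ?_
    by_cases hBW : B ∈ W L k
    · rw [sum_Hmat (mem_powerset.1 hB), (mem_powersetCard.1 hBW).2]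
    · rw [hSsupp k hk' B hBW, mul_zero, mul_zero]
end

section
/- Fix integers L ≥ 1, 0 ≤ N ≤ L and a real number q. For an N-element subset B = {n_1 < n_2 < ... < n_N} of {1,...,L} define f(B) = q^{w(B)} with w(B) = ∑_{j=1}^{N} (L − j + 1 − n_j). Then f is a stationary state of the closed ASEP generator M_0 restricted to the N-particle sector: for every N-element subset A, (M_0 f)(A) = 0. -/
/-!
The measure `f(B) = q ^ w(B)` satisfies detailed balance. A hop of one particle from `i` to `i + 1`
lowers `w` by exactly `1`, so the flow `1 * f(B)` of a rightward hop equals the flow `q * f(B')` of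
the reverse leftward hop. Hence, bond by bond, the rate at which `A` is entered equals the
rate at which it is left, and `(M₀ f)(A) = 0`.

To include `q = 0`, where `q ^ (w + 1) = q ^ w * q` fails at `w = -1`, the exponent has to be
nonnegative; this is `wgt_nonneg`, by induction on `L`. The sum over `B` is carried out in
`sum_right` and `sum_left`: for each bond, at most one configuration hops to `A` across it.
-/

open Finset

/-- The exponent `w(B) = ∑_{j=1}^N (L − j + 1 − n_j)` for `B = {n_1 < ... < n_N}`,
written as `∑_{n ∈ B} (L + 1 − n) − ∑_{j=1}^N j`. -/
def wgt (L : ℕ) (B : Finset ℕ) : ℤ :=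
  (∑ n ∈ B, ((L : ℤ) + 1 - (n : ℤ))) - ((B.card * (B.card + 1)) / 2 : ℕ)

/-- The closed ASEP generator with asymmetry parameter `q`: for each `1 ≤ i ≤ L−1` a
rightward hop `B → (B∖{i})∪{i+1}` at rate `1` when `i ∈ B`, `i+1 ∉ B`, and a leftward hop
`B → (B∖{i+1})∪{i}` at rate `q` when `i+1 ∈ B`, `i ∉ B`; off-diagonal entries are total
transition rates and the diagonal entry is minus the total exit rate. -/
noncomputable def M0asep (L : ℕ) (q : ℝ) (A B : Finset ℕ) : ℝ :=
  if A = B then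
    -((((Finset.Icc 1 (L - 1)).filter fun i => i ∈ B ∧ i + 1 ∉ B).card : ℝ)
      + q * (((Finset.Icc 1 (L - 1)).filter fun i => i ∉ B ∧ i + 1 ∈ B).card : ℝ))
  else
    ∑ i ∈ Finset.Icc 1 (L - 1),
      ((if i ∈ B ∧ i + 1 ∉ B ∧ A = insert (i + 1) (B.erase i) then (1 : ℝ) else 0)
        + (if i + 1 ∈ B ∧ i ∉ B ∧ A = insert i (B.erase (i + 1)) then q else 0))

theorem triangle_succ (c : ℕ) : (c + 1) * (c + 1 + 1) / 2 = c * (c + 1) / 2 + (c + 1) := by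
  rw [show (c + 1) * (c + 1 + 1) = c * (c + 1) + 2 * (c + 1) by ring]
  omega

theorem wgt_nonneg (L : ℕ) : ∀ B ⊆ sites L, 0 ≤ wgt L B := by
  induction L with
  | zero =>
    intro B hB
    have : B = ∅ := by simpa [sites] using hB
    subst this
    simp [wgt]
  | succ L ih =>
    intro B hB
    -- Raising `L` by one adds `1` to every summand, that is, adds the number of particles.
    have key : ∀ C : Finset ℕ, wgt (L + 1) C = wgt L C + C.card := by
      intro C
      have : ∀ n ∈ C, (((L + 1 : ℕ) : ℤ) + 1 - n) = ((L : ℤ) + 1 - n) + 1 := by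
        intro n _
        push_cast
        ring
      unfold wgt
      rw [Finset.sum_congr rfl this, Finset.sum_add_distrib]
      simp
      ring
    have hsub : B.erase (L + 1) ⊆ sites L := by
      intro x hx
      have h1 := hB (Finset.mem_of_mem_erase hx)
      have h2 := Finset.ne_of_mem_erase hx
      simp only [sites, Finset.mem_Icc] at h1 ⊢
      omega
    have h := ih _ hsub
    by_cases hm : L + 1 ∈ B
    · have hc : B.card = (B.erase (L + 1)).card + 1 := (Finset.card_erase_add_one hm).symm
      have hs := Finset.add_sum_erase B (fun n : ℕ => (L : ℤ) + 1 - n) hm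
      rw [key]
      unfold wgt at h ⊢
      rw [← hs, hc, triangle_succ]
      push_cast at h ⊢
      linarith
    · rw [Finset.erase_eq_of_notMem hm] at h
      rw [key]
      positivity

/-- Moving a particle one site to the right lowers the exponent by one. -/
theorem wgt_hop (L i : ℕ) (B : Finset ℕ) (hi : i ∈ B) (hi' : i + 1 ∉ B) :
    wgt L B = wgt L (insert (i + 1) (B.erase i)) + 1 := by
  have hn : i + 1 ∉ B.erase i := fun h => hi' (Finset.mem_of_mem_erase h)
  have hc : (insert (i + 1) (B.erase i)).card = B.card := by
    rw [Finset.card_insert_of_notMem hn, Finset.card_erase_add_one hi]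
  have hs := Finset.add_sum_erase B (fun n : ℕ => (L : ℤ) + 1 - n) hi
  unfold wgt
  rw [hc, Finset.sum_insert hn, ← hs]
  push_cast
  ring

theorem hop_subset {L : ℕ} {B : Finset ℕ} (hB : B ⊆ sites L) {i : ℕ} (hi : i ∈ sites L) (j : ℕ) :
    insert i (B.erase j) ⊆ sites L :=
  Finset.insert_subset hi ((Finset.erase_subset _ _).trans hB)

/-- Detailed balance across the bond `(i, i + 1)`. -/
theorem detailed_balance (L i : ℕ) (q : ℝ) (B : Finset ℕ) (hB : B ⊆ sites L) (hi : i ∈ B)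
    (hi' : i + 1 ∉ B) (hL : i + 1 ∈ sites L) :
    q ^ wgt L B = q * q ^ wgt L (insert (i + 1) (B.erase i)) := by
  have h0 := wgt_nonneg L _ (hop_subset hB hL i)
  rw [wgt_hop L i B hi hi', zpow_add' (by right; left; omega), zpow_one, mul_comm]

theorem hop_iff (A B : Finset ℕ) (i j : ℕ) (hij : i ≠ j) :
    (i ∈ B ∧ j ∉ B ∧ A = insert j (B.erase i)) ↔
      (B = insert i (A.erase j) ∧ j ∈ A ∧ i ∉ A) := by
  constructor
  · rintro ⟨h1, h2, rfl⟩
    refine ⟨?_, by simp, by simp [hij]⟩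
    rw [Finset.erase_insert (by simp [h2]), Finset.insert_erase h1]
  · rintro ⟨rfl, h1, h2⟩
    refine ⟨by simp, by simp [hij.symm], ?_⟩
    rw [Finset.erase_insert (by simp [h2]), Finset.insert_erase h1]

/-- The only configuration entering `A` by a hop from `i` to `j` is `(A ∖ {j}) ∪ {i}`. -/
theorem sum_hop (L : ℕ) (A : Finset ℕ) (hA : A ⊆ sites L) (i j : ℕ) (hij : i ≠ j)
    (hi : i ∈ sites L) (c : ℝ) (f : Finset ℕ → ℝ) :
    ∑ B ∈ (sites L).powerset, (if i ∈ B ∧ j ∉ B ∧ A = insert j (B.erase i) then c else 0) * f B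
      = if j ∈ A ∧ i ∉ A then c * f (insert i (A.erase j)) else 0 := by
  simp only [hop_iff A _ i j hij, ite_and, ite_mul, zero_mul]
  rw [Finset.sum_ite_eq']
  rw [if_pos (Finset.mem_powerset.2 (hop_subset hA hi j))]

/-- Flow into `A` by rightward hops across `(i, i + 1)`. -/
theorem sum_right (L : ℕ) (q : ℝ) (A : Finset ℕ) (hA : A ⊆ sites L) (i : ℕ)
    (hi : i ∈ sites L) :
    ∑ B ∈ (sites L).powerset,
        (if i ∈ B ∧ i + 1 ∉ B ∧ A = insert (i + 1) (B.erase i) then (1 : ℝ) else 0) * q ^ wgt L B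
      = if i ∉ A ∧ i + 1 ∈ A then q * q ^ wgt L A else 0 := by
  rw [sum_hop L A hA i (i + 1) (by omega) hi 1 (fun B => q ^ wgt L B)]
  by_cases h : i + 1 ∈ A ∧ i ∉ A
  · rw [if_pos h, if_pos h.symm, one_mul]
    have hb := detailed_balance L i q (insert i (A.erase (i + 1))) (hop_subset hA hi _)
      (by simp) (by simp) (hA h.1)
    rwa [Finset.erase_insert (by simp [h.2]), Finset.insert_erase h.1] at hb
  · rw [if_neg h, if_neg (fun h' => h h'.symm)]

/-- Flow into `A` by leftward hops across `(i, i + 1)`. -/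
theorem sum_left (L : ℕ) (q : ℝ) (A : Finset ℕ) (hA : A ⊆ sites L) (i : ℕ)
    (hi' : i + 1 ∈ sites L) :
    ∑ B ∈ (sites L).powerset,
        (if i + 1 ∈ B ∧ i ∉ B ∧ A = insert i (B.erase (i + 1)) then q else 0) * q ^ wgt L B
      = if i ∈ A ∧ i + 1 ∉ A then q ^ wgt L A else 0 := by
  rw [sum_hop L A hA (i + 1) i (by omega) hi' q (fun B => q ^ wgt L B)]
  by_cases h : i ∈ A ∧ i + 1 ∉ A
  · rw [if_pos h, if_pos h, detailed_balance L i q A hA h.1 h.2 hi']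
  · rw [if_neg h, if_neg h]

/-- The generator as diagonal part plus hopping part; the hopping part needs no restriction
to `A ≠ B`, since a hop always changes the configuration. -/
theorem M0asep_eq (L : ℕ) (q : ℝ) (A B : Finset ℕ) :
    M0asep L q A B =
      (if A = B then
        -((((Finset.Icc 1 (L - 1)).filter fun i => i ∈ A ∧ i + 1 ∉ A).card : ℝ)
          + q * (((Finset.Icc 1 (L - 1)).filter fun i => i ∉ A ∧ i + 1 ∈ A).card : ℝ)) else 0)
      + ∑ i ∈ Finset.Icc 1 (L - 1),
        ((if i ∈ B ∧ i + 1 ∉ B ∧ A = insert (i + 1) (B.erase i) then (1 : ℝ) else 0)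
          + (if i + 1 ∈ B ∧ i ∉ B ∧ A = insert i (B.erase (i + 1)) then q else 0)) := by
  unfold M0asep
  by_cases h : A = B
  · subst h
    rw [if_pos rfl, if_pos rfl, Finset.sum_eq_zero, add_zero]
    intro i _
    rw [if_neg, if_neg, add_zero]
    · rintro ⟨_, h2, h3⟩
      exact h2 (h3 ▸ Finset.mem_insert_self _ _)
    · rintro ⟨_, h2, h3⟩
      exact h2 (h3 ▸ Finset.mem_insert_self _ _)
  · rw [if_neg h, if_neg h, zero_add]

/-- `f(B) = q^{w(B)}` is stationary for the closed ASEP restricted to the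
`N`-particle sector: `(M₀ f)(A) = 0` for every `N`-element subset `A` of `{1,...,L}`. -/
theorem stmt8 (L N : ℕ) (hL : 1 ≤ L) (hN : N ≤ L) (q : ℝ) :
    ∀ A ∈ W L N,
      ∑ B ∈ (sites L).powerset, M0asep L q A B * q ^ wgt L B = 0 := by
  intro A hAW
  have hA : A ⊆ sites L := (Finset.mem_powersetCard.1 hAW).1
  simp only [M0asep_eq, add_mul, Finset.sum_add_distrib, Finset.sum_mul]
  rw [Finset.sum_comm (t := Finset.Icc 1 (L - 1)), Finset.sum_comm (t := Finset.Icc 1 (L - 1))]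
  have hb : ∀ i ∈ Finset.Icc 1 (L - 1), i ∈ sites L ∧ i + 1 ∈ sites L := by
    intro i hi
    simp only [sites, Finset.mem_Icc] at hi ⊢
    omega
  rw [Finset.sum_congr rfl (fun i hi => sum_right L q A hA i (hb i hi).1),
    Finset.sum_congr rfl (fun i hi => sum_left L q A hA i (hb i hi).2)]
  simp only [ite_mul, zero_mul]
  rw [Finset.sum_ite_eq, if_pos (Finset.mem_powerset.2 hA), ← Finset.sum_filter,
    ← Finset.sum_filter, Finset.sum_const, Finset.sum_const, nsmul_eq_mul, nsmul_eq_mul]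
  ring
end

section
/- Let L ≥ 2, 0 ≤ N ≤ L be integers, let 0 < q < 1 and let α, a be real numbers. Consider site rates α_1 = α, α_n = a for 2 ≤ n ≤ L−1 and α_L = 0, and let P_N be the normalized closed-ASEP stationary measure on N-element subsets of {1,...,L}. Then the sector-N expectation A_N = ∑_{B} P_N(B) ∑_{n ∈ B} α_n equals ( a(N−1) + a q^N + (α − a) q^{L−N} + (a − α − aN) q^L ) / (1 − q^L). -/
/-!
By linearity, the inner sum over `B` is `a N + (α - a) [1 ∈ B] - a [L ∈ B]` (here `1 ≠ L`), so only
the probabilities that the first and the last site are occupied are needed.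

Up to the constant `q ^ (N choose 2)`, the weight of `B` is `∏ n ∈ B, q ^ (L - n)`, so partition
functions are elementary symmetric polynomials of geometric progressions. The `q`-binomial theorem
in the subtraction-free form `esum_mul_qfac` evaluates them on any interval of sites:
`e_N * ∏ i < N, (1 - q ^ (i + 1)) = c ^ N * ∏ i < N, (q ^ i - q ^ M)`.
The subsets containing the first (last) site correspond to the `(N - 1)`-subsets of the remaining
interval of `L - 1` sites (`esum_insert_mem`). Dividing by the full partition function gives
`P(1 ∈ B) = q ^ (L - N) (1 - q ^ N) / (1 - q ^ L)` and `P(L ∈ B) = (1 - q ^ N) / (1 - q ^ L)`.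
-/

open Finset

/-- The elementary symmetric polynomial of degree `N` in the values `f n`, `n ∈ s`. -/
def esum (s : Finset ℕ) (N : ℕ) (f : ℕ → ℝ) : ℝ :=
  ∑ B ∈ Finset.powersetCard N s, ∏ n ∈ B, f n

/-- The product `(1 - q) (1 - q ^ 2) ⋯ (1 - q ^ N)`. -/
def qfac (q : ℝ) (N : ℕ) : ℝ := ∏ i ∈ Finset.range N, (1 - q ^ (i + 1))

/-- The product `∏ i < N, (q ^ i - q ^ L)`; for `N ≤ L` it is
`q ^ (N choose 2)` times the numerator of the Gaussian binomial `[L choose N]_q`,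
and it vanishes for `N > L`. -/
def qnum (q : ℝ) (L N : ℕ) : ℝ := ∏ i ∈ Finset.range N, (q ^ i - q ^ L)

lemma esum_zero (s : Finset ℕ) (f : ℕ → ℝ) : esum s 0 f = 1 := by
  simp [esum]

lemma esum_congr {s : Finset ℕ} {N : ℕ} {f g : ℕ → ℝ} (h : ∀ n ∈ s, f n = g n) :
    esum s N f = esum s N g := by
  refine Finset.sum_congr rfl fun B hB => Finset.prod_congr rfl fun n hn => h n ?_
  exact (Finset.mem_powersetCard.1 hB).1 hn

/-- Subsets of `insert x s` that contain `x` are the sets `insert x C` with `C ⊆ s`. -/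
lemma esum_insert_mem {s : Finset ℕ} {x : ℕ} (hx : x ∉ s) (N : ℕ) (f : ℕ → ℝ) :
    ∑ B ∈ Finset.powersetCard (N + 1) (insert x s), (∏ n ∈ B, f n) * (if x ∈ B then 1 else 0)
      = f x * esum s N f := by
  have hnot : ∀ k, ∀ B ∈ Finset.powersetCard k s, x ∉ B := fun k B hB h =>
    hx ((Finset.mem_powersetCard.1 hB).1 h)
  rw [Finset.powersetCard_succ_insert hx, Finset.sum_union, Finset.sum_image]
  · rw [Finset.sum_eq_zero, zero_add, esum, Finset.mul_sum]
    · refine Finset.sum_congr rfl fun B hB => ?_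
      rw [Finset.prod_insert (hnot _ B hB)]
      simp
    · intro B hB
      simp [hnot _ B hB]
  · intro B hB C hC h
    rw [← Finset.erase_insert (hnot _ B hB), ← Finset.erase_insert (hnot _ C hC)]
    exact congrArg (fun S => Finset.erase S x) h
  · rw [Finset.disjoint_left]
    intro B hB hB'
    obtain ⟨C, -, rfl⟩ := Finset.mem_image.1 hB'
    exact hnot _ _ hB (Finset.mem_insert_self x C)

lemma esum_insert {s : Finset ℕ} {x : ℕ} (hx : x ∉ s) (N : ℕ) (f : ℕ → ℝ) :
    esum (insert x s) (N + 1) f = esum s (N + 1) f + f x * esum s N f := by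
  have hnot : ∀ k, ∀ B ∈ Finset.powersetCard k s, x ∉ B := fun k B hB h =>
    hx ((Finset.mem_powersetCard.1 hB).1 h)
  rw [esum, Finset.powersetCard_succ_insert hx, Finset.sum_union, Finset.sum_image]
  · congr 1
    rw [esum, Finset.mul_sum]
    exact Finset.sum_congr rfl fun B hB => Finset.prod_insert (hnot _ B hB)
  · intro B hB C hC h
    rw [← Finset.erase_insert (hnot _ B hB), ← Finset.erase_insert (hnot _ C hC)]
    exact congrArg (fun S => Finset.erase S x) h
  · rw [Finset.disjoint_left]
    intro B hB hB'
    obtain ⟨C, -, rfl⟩ := Finset.mem_image.1 hB'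
    exact hnot _ _ hB (Finset.mem_insert_self x C)

lemma qnum_succ_succ (q : ℝ) (L N : ℕ) :
    qnum q (L + 1) (N + 1) = (1 - q ^ (L + 1)) * q ^ N * qnum q L N := by
  have h : ∀ i ∈ Finset.range N, q ^ (i + 1) - q ^ (L + 1) = q * (q ^ i - q ^ L) := by
    intro i _; ring
  rw [qnum, Finset.prod_range_succ', Finset.prod_congr rfl h, Finset.prod_mul_distrib, qnum]
  simp
  ring

/-- The `q`-binomial theorem for the geometric progression `c, c q, …, c q ^ (M - 1)`, attached to
the sites `u + M, …, u + 1`. It holds for all `N`, both sides being zero for `N > M`. -/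
lemma esum_mul_qfac (q : ℝ) (u M : ℕ) : ∀ (N : ℕ) (c : ℝ),
    esum (Finset.Ioc u (u + M)) N (fun n => c * q ^ (u + M - n)) * qfac q N
      = c ^ N * qnum q M N := by
  induction M with
  | zero =>
    intro N c
    rcases N with _ | N
    · simp [esum_zero, qfac, qnum]
    · have : qnum q 0 (N + 1) = 0 :=
        Finset.prod_eq_zero (Finset.mem_range.2 N.succ_pos) (by simp)
      have hE : Finset.powersetCard (N + 1) (∅ : Finset ℕ) = ∅ :=
        Finset.powersetCard_eq_empty.2 (by simp)
      simp [this, esum, hE]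
  | succ M ih =>
    intro N c
    rcases N with _ | N
    · simp [esum_zero, qfac, qnum]
    · have hins : Finset.Ioc u (u + (M + 1)) = insert (u + M + 1) (Finset.Ioc u (u + M)) := by
        ext n; simp only [Finset.mem_Ioc, Finset.mem_insert]; omega
      have hc : ∀ k, esum (Finset.Ioc u (u + M)) k (fun n => c * q ^ (u + (M + 1) - n))
          = esum (Finset.Ioc u (u + M)) k (fun n => (c * q) * q ^ (u + M - n)) := by
        intro k
        refine esum_congr fun n hn => ?_
        have : u + (M + 1) - n = (u + M - n) + 1 := by
          have := (Finset.mem_Ioc.1 hn).2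
          omega
        rw [this]; ring
      rw [hins, esum_insert (by simp), hc, hc, qnum_succ_succ]
      have h1 := ih (N + 1) (c * q)
      have h2 := ih N (c * q)
      have hQ : qfac q (N + 1) = qfac q N * (1 - q ^ (N + 1)) := Finset.prod_range_succ _ _
      have hT : qnum q M (N + 1) = qnum q M N * (q ^ N - q ^ M) := Finset.prod_range_succ _ _
      have h0 : u + (M + 1) - (u + M + 1) = 0 := by omega
      rw [add_mul, h1, h0, hT, hQ]
      linear_combination c * (1 - q ^ (N + 1)) * h2

lemma qfac_ne_zero {q : ℝ} (hq0 : 0 < q) (hq1 : q < 1) (N : ℕ) : qfac q N ≠ 0 :=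
  Finset.prod_ne_zero_iff.2 fun _ _ =>
    (sub_pos.2 (pow_lt_one₀ hq0.le hq1 (Nat.succ_ne_zero _))).ne'

lemma qnum_ne_zero {q : ℝ} (hq0 : 0 < q) (hq1 : q < 1) {L N : ℕ} (hN : N ≤ L) :
    qnum q L N ≠ 0 :=
  Finset.prod_ne_zero_iff.2 fun _ hi =>
    ne_of_gt (sub_pos.2 (pow_lt_pow_right_of_lt_one₀ hq0 hq1
      ((Finset.mem_range.1 hi).trans_le hN)))

/-- The Gaussian binomial coefficient in terms of `qnum` and `qfac`. -/
lemma gauss_mul {q : ℝ} (hq0 : 0 < q) (hq1 : q < 1) {L N : ℕ} (hN : N ≤ L) :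
    (∏ i ∈ Finset.Icc 1 N, (1 - q ^ (L - N + i)) / (1 - q ^ i)) * qfac q N * q ^ (N.choose 2)
      = qnum q L N := by
  have hIcc : Finset.Icc 1 N = Finset.Ico 1 (N + 1) := by
    ext n; simp only [Finset.mem_Icc, Finset.mem_Ico]; omega
  have hden : ∏ i ∈ Finset.Icc 1 N, (1 - q ^ i) = qfac q N := by
    rw [hIcc, Finset.prod_Ico_eq_prod_range, qfac]
    simp [add_comm]
  have hnum : ∏ i ∈ Finset.Icc 1 N, (1 - q ^ (L - N + i))
      = ∏ i ∈ Finset.range N, (1 - q ^ (L - i)) := by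
    rw [hIcc, Finset.prod_Ico_eq_prod_range, ← Finset.prod_range_reflect, Nat.add_sub_cancel]
    refine Finset.prod_congr rfl fun i hi => ?_
    have := Finset.mem_range.1 hi
    congr 2
    omega
  rw [Finset.prod_div_distrib, hden, div_mul_cancel₀ _ (qfac_ne_zero hq0 hq1 N), hnum,
    Nat.choose_two_right, ← Finset.sum_range_id, ← Finset.prod_pow_eq_pow_sum, ← Finset.prod_mul_distrib,
    qnum]
  refine Finset.prod_congr rfl fun i hi => ?_
  have := Finset.mem_range.1 hi
  rw [sub_mul, one_mul, ← pow_add, Nat.sub_add_cancel (by omega)]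

lemma zpow_wgt {q : ℝ} (hq0 : 0 < q) {L N : ℕ} {B : Finset ℕ} (hB : B ∈ W L N) :
    q ^ wgt L B * q ^ (N.choose 2) = ∏ n ∈ B, q ^ (L - n) := by
  obtain ⟨hs, hc⟩ := Finset.mem_powersetCard.1 hB
  rw [Finset.prod_pow_eq_pow_sum, ← zpow_natCast, ← zpow_natCast, ← zpow_add₀ hq0.ne']
  congr 1
  have h1 : ((∑ n ∈ B, (L - n) : ℕ) : ℤ) = ∑ n ∈ B, ((L : ℤ) + 1 - n) - N := by
    rw [Nat.cast_sum, ← hc, Finset.card_eq_sum_ones, Nat.cast_sum, ← Finset.sum_sub_distrib]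
    refine Finset.sum_congr rfl fun n hn => ?_
    have := (Finset.mem_Icc.1 (hs hn)).2
    push_cast [Nat.cast_sub this]
    ring
  have h2 : N * (N + 1) / 2 = N.choose 2 + N := by
    have h := Nat.choose_two_right (N + 1)
    rw [Nat.succ_sub_one, mul_comm] at h
    rw [← h, Nat.choose_succ_succ' N 1, Nat.choose_one_right]
    ring
  rw [h1, wgt, hc, h2]
  push_cast
  ring

lemma sum_rates {L N : ℕ} (hL : 2 ≤ L) {B : Finset ℕ} (hB : B ∈ W L N) (α a : ℝ) :
    (∑ n ∈ B, if n = 1 then α else if n = L then 0 else a)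
      = a * N + (α - a) * (if 1 ∈ B then 1 else 0) - a * (if L ∈ B then 1 else 0) := by
  obtain ⟨-, hc⟩ := Finset.mem_powersetCard.1 hB
  have h : ∀ n ∈ B, (if n = 1 then α else if n = L then 0 else a)
      = a + (if n = 1 then α - a else 0) - (if n = L then a else 0) := by
    intro n _
    split_ifs with h1 h2 <;> first | omega | ring
  rw [Finset.sum_congr rfl h, Finset.sum_sub_distrib, Finset.sum_add_distrib,
    Finset.sum_ite_eq', Finset.sum_ite_eq', Finset.sum_const, hc]
  simp only [nsmul_eq_mul, mul_ite, mul_one, mul_zero]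
  ring

/-- for site rates `α_1 = α`, `α_n = a` for `2 ≤ n ≤ L−1`, `α_L = 0`, the
sector-`N` expectation of the total adsorption rate under the normalized closed-ASEP
stationary measure `P_N(B) = q^{w(B)}/[L choose N]_q` is
`A_N = (a(N−1) + a q^N + (α − a) q^{L−N} + (a − α − aN) q^L)/(1 − q^L)`. -/
theorem stmt17 (L N : ℕ) (hL : 2 ≤ L) (hN : N ≤ L) (q α a : ℝ)
    (hq0 : 0 < q) (hq1 : q < 1) :
    ∑ B ∈ W L N,
        (q ^ wgt L B / ∏ i ∈ Finset.Icc 1 N, (1 - q ^ (L - N + i)) / (1 - q ^ i)) *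
          (∑ n ∈ B, if n = 1 then α else if n = L then 0 else a)
      = (a * ((N : ℝ) - 1) + a * q ^ N + (α - a) * q ^ (L - N)
          + (a - α - a * (N : ℝ)) * q ^ L) / (1 - q ^ L) := by
  have hQ := qfac_ne_zero hq0 hq1 N
  have hT := qnum_ne_zero hq0 hq1 hN
  have hqL : 1 - q ^ L ≠ 0 := (sub_pos.2 (pow_lt_one₀ hq0.le hq1 (by omega))).ne'
  have hG := gauss_mul hq0 hq1 hN
  have hterm : ∀ B ∈ W L N,
      (q ^ wgt L B / ∏ i ∈ Finset.Icc 1 N, (1 - q ^ (L - N + i)) / (1 - q ^ i)) *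
          (∑ n ∈ B, if n = 1 then α else if n = L then 0 else a)
        = qfac q N / qnum q L N * (a * N * (∏ n ∈ B, q ^ (L - n))
          + (α - a) * ((∏ n ∈ B, q ^ (L - n)) * (if 1 ∈ B then 1 else 0))
          - a * ((∏ n ∈ B, q ^ (L - n)) * (if L ∈ B then 1 else 0))) := by
    intro B hB
    rw [sum_rates hL hB, ← zpow_wgt hq0 hB, ← hG]
    have hK : q ^ (N.choose 2) ≠ 0 := pow_ne_zero _ hq0.ne'
    have hg : (∏ i ∈ Finset.Icc 1 N, (1 - q ^ (L - N + i)) / (1 - q ^ i)) ≠ 0 := by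
      intro h0
      rw [h0] at hG
      exact hT (by rw [← hG]; ring)
    generalize (∏ i ∈ Finset.Icc 1 N, (1 - q ^ (L - N + i)) / (1 - q ^ i)) = g at hg
    field_simp
  rw [Finset.sum_congr rfl hterm, ← Finset.mul_sum, Finset.sum_sub_distrib,
    Finset.sum_add_distrib, ← Finset.mul_sum, ← Finset.mul_sum, ← Finset.mul_sum]
  rcases N with _ | N
  · simp [W, qfac, qnum]
    rw [← add_mul]
    simp
  · obtain ⟨M, rfl⟩ : ∃ M, L = M + 1 := ⟨L - 1, by omega⟩
    have hW0 : sites (M + 1) = Finset.Ioc 0 (0 + (M + 1)) := by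
      ext n; simp only [sites, Finset.mem_Icc, Finset.mem_Ioc]; omega
    have hW1 : sites (M + 1) = insert 1 (Finset.Ioc 1 (1 + M)) := by
      ext n; simp only [sites, Finset.mem_Icc, Finset.mem_Ioc, Finset.mem_insert]; omega
    have hWL : sites (M + 1) = insert (M + 1) (Finset.Ioc 0 (0 + M)) := by
      ext n; simp only [sites, Finset.mem_Icc, Finset.mem_Ioc, Finset.mem_insert]; omega
    have hQs : qfac q (N + 1) = qfac q N * (1 - q ^ (N + 1)) := Finset.prod_range_succ _ _
    have hTs := qnum_succ_succ q M N
    have e0 : (∑ B ∈ W (M + 1) (N + 1), ∏ n ∈ B, q ^ (M + 1 - n)) * qfac q (N + 1)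
        = qnum q (M + 1) (N + 1) := by
      have h := esum_mul_qfac q 0 (M + 1) (N + 1) 1
      simp only [one_mul, one_pow] at h
      rw [← h, W, hW0, esum]
      simp
    have e1 : (∑ B ∈ W (M + 1) (N + 1), (∏ n ∈ B, q ^ (M + 1 - n)) * (if 1 ∈ B then 1 else 0))
        * qfac q (N + 1) = q ^ M * (1 - q ^ (N + 1)) * qnum q M N := by
      have h := esum_mul_qfac q 1 M N 1
      simp only [one_mul, one_pow] at h
      rw [W, hW1, esum_insert_mem (by simp), hQs, ← h]
      simp only [add_comm M 1, Nat.add_sub_cancel_left]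
      ring
    have eL : (∑ B ∈ W (M + 1) (N + 1),
        (∏ n ∈ B, q ^ (M + 1 - n)) * (if M + 1 ∈ B then 1 else 0))
        * qfac q (N + 1) = (1 - q ^ (N + 1)) * q ^ N * qnum q M N := by
      have h := esum_mul_qfac q 0 M N q
      have hc : esum (Finset.Ioc 0 (0 + M)) N (fun n => q ^ (M + 1 - n))
          = esum (Finset.Ioc 0 (0 + M)) N (fun n => q * q ^ (0 + M - n)) := by
        refine esum_congr fun n hn => ?_
        have : M + 1 - n = (0 + M - n) + 1 := by
          have := (Finset.mem_Ioc.1 hn).2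
          omega
        rw [this, pow_succ']
      rw [W, hWL, esum_insert_mem (by simp), hQs, hc]
      simp only [Nat.sub_self, pow_zero]
      linear_combination (1 - q ^ (N + 1)) * h
    have hsplit : q ^ M = q ^ (M + 1 - (N + 1)) * q ^ N := by
      rw [← pow_add]; congr 1; omega
    have hqM : q ^ (M + 1) = q ^ (M + 1 - (N + 1)) * q ^ (N + 1) := by
      rw [← pow_add]; congr 1; omega
    rw [div_mul_eq_mul_div, div_eq_div_iff hT hqL]
    rw [hsplit] at e1
    rw [hTs] at e0 ⊢
    generalize q ^ (M + 1 - (N + 1)) = r at *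
    push_cast
    -- The three evaluated sums enter linearly; `hqM` is `q ^ L = q ^ (L - N) * q ^ N`.
    linear_combination (1 - q ^ (M + 1)) * (a * (N + 1) * e0 + (α - a) * e1 - a * eL)
      + (1 - q ^ (M + 1)) * q ^ N * qnum q M N * (α - a) * hqM
end
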